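/- Every nontrivial square-complementary graph has minimum degree at least 2: if G is a square-complementary graph with more than one vertex, then every vertex of G has degree at least 2. -/

import Mathlib

/-!
Write `H` for the complement of `G²`, so that `H ≅ G`; distinct vertices are adjacent in `H` iff they
are at distance at least 3 in `G`.

An isolated vertex `v` of `G` would be universal in `H`, so `G ≅ H` would have both an isolated and
a universal vertex, which is impossible with more than one vertex (`squco_exists_adj`).

If `v` is a vertex whose only neighbor is `w`, then the `H`-neighborhood of `v` is the complement of
the closed neighborhood `N[w]`, while `N[w]` has diameter at most 2 in `G`, hence is independent
in `H`. As `H` has no isolated vertex, each vertex of `N[w]` has an `H`-neighbor outside `N[w]`,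
so it is at `H`-distance at most 2 from `v`. Thus the image of `v` in `G` is within distance 2 of
every vertex of `G`, that is, isolated in `H`: a contradiction.
-/

open SimpleGraph

/-- The square of a simple graph: two distinct vertices are adjacent iff they are adjacent
in `G` or have a common neighbor in `G`. -/
def SimpleGraph.square {V : Type*} (G : SimpleGraph V) : SimpleGraph V :=
  SimpleGraph.fromRel (fun x y => G.Adj x y ∨ ∃ z, G.Adj x z ∧ G.Adj z y)

theorem square_adj_iff {V : Type*} (G : SimpleGraph V) (x y : V) :
    G.square.Adj x y ↔ x ≠ y ∧ (G.Adj x y ∨ ∃ z, G.Adj x z ∧ G.Adj z y) := by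
  simp only [SimpleGraph.square, SimpleGraph.fromRel_adj]
  constructor
  · rintro ⟨h, h1 | h1 | ⟨z, h1, h2⟩⟩
    · exact ⟨h, h1⟩
    · exact ⟨h, Or.inl h1.symm⟩
    · exact ⟨h, Or.inr ⟨z, h2.symm, h1.symm⟩⟩
  · rintro ⟨h, h1⟩
    exact ⟨h, Or.inl h1⟩

/-- The isomorphism read on complements: `e` carries the complement of `G²` to `G`. -/
theorem squco_adj_iff {V : Type*} {G : SimpleGraph V} (e : G.square ≃g Gᶜ) (x y : V) :
    G.Adj (e x) (e y) ↔ x ≠ y ∧ ¬ G.square.Adj x y := by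
  rw [← e.map_adj_iff, SimpleGraph.compl_adj, ← e.injective.ne_iff]
  constructor
  · intro h
    exact ⟨h.ne, fun h' => h'.2 h⟩
  · rintro ⟨h, h'⟩
    by_contra h2
    exact h' ⟨h, h2⟩

/-- A nontrivial square-complementary graph has no isolated vertex. -/
theorem squco_exists_adj {V : Type*} [Nontrivial V] {G : SimpleGraph V}
    (e : G.square ≃g Gᶜ) (v : V) : ∃ w, G.Adj v w := by
  by_contra! hv
  have huniv : ∀ x, x ≠ v → G.Adj (e v) (e x) := by
    intro x hx
    rw [squco_adj_iff, square_adj_iff]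
    refine ⟨hx.symm, ?_⟩
    rintro ⟨-, h | ⟨z, h, -⟩⟩ <;> exact hv _ h
  obtain ⟨x, rfl⟩ := e.surjective v
  by_cases hx : x = e x
  · obtain ⟨y, hy⟩ := exists_ne (e x)
    have h := huniv y hy
    rw [congrArg e hx.symm] at h
    exact hv _ h
  · exact hv _ (huniv x hx).symm

theorem squco_min_degree_ge_two {V : Type*} [Fintype V] [Nontrivial V]
    (G : SimpleGraph V) [DecidableRel G.Adj] (hsq : Nonempty (G.square ≃g Gᶜ)) :
    ∀ v : V, 2 ≤ G.degree v := by
  classical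
  obtain ⟨e⟩ := hsq
  intro v
  by_contra! hdeg
  obtain ⟨w, hvw⟩ := squco_exists_adj e v
  have huniq : ∀ x, G.Adj v x → x = w := by
    intro x hx
    have hcard : (G.neighborFinset v).card ≤ 1 := by
      rw [G.card_neighborFinset_eq_degree]
      omega
    exact Finset.card_le_one.mp hcard x (by simpa using hx) w (by simpa using hvw)
  -- The vertices at distance at most 2 from `v` lie in the closed neighborhood of `w`.
  have hnear : ∀ x, G.square.Adj v x → x = w ∨ G.Adj w x := by
    intro x hx
    obtain ⟨-, h | ⟨z, h, h'⟩⟩ := (square_adj_iff G v x).mp hx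
    · exact Or.inl (huniq x h)
    · exact Or.inr (huniq z h ▸ h')
  have hcentral : ∀ y, e v ≠ y → G.square.Adj (e v) y := by
    intro y hy
    rw [square_adj_iff]
    refine ⟨hy, ?_⟩
    obtain ⟨x, rfl⟩ := e.surjective y
    by_cases hadj : G.Adj (e v) (e x)
    · exact Or.inl hadj
    have hvx : v ≠ x := fun h => hy (congrArg e h)
    have hsqx : G.square.Adj v x := by
      by_contra h
      exact hadj ((squco_adj_iff e v x).mpr ⟨hvx, h⟩)
    -- Any neighbor of `e x` serves as a common neighbor of `e v` and `e x`.
    obtain ⟨y, hxy⟩ := squco_exists_adj e (e x)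
    obtain ⟨z, rfl⟩ := e.surjective y
    obtain ⟨hxz, hfar⟩ := (squco_adj_iff e x z).mp hxy
    refine Or.inr ⟨e z, (squco_adj_iff e v z).mpr ⟨?_, ?_⟩, hxy.symm⟩
    · rintro rfl
      exact hfar hsqx.symm
    · intro hsqz
      refine hfar ((square_adj_iff G x z).mpr ⟨hxz, ?_⟩)
      rcases hnear x hsqx with rfl | hx <;> rcases hnear z hsqz with rfl | hz
      · exact absurd rfl hxz
      · exact Or.inl hz
      · exact Or.inl hx.symm
      · exact Or.inr ⟨w, hx.symm, hz⟩
  obtain ⟨y, hy⟩ := squco_exists_adj e (e (e v))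
  obtain ⟨t, rfl⟩ := e.surjective y
  obtain ⟨hne, hfar⟩ := (squco_adj_iff e (e v) t).mp hy
  exact hfar (hcentral t hne)
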